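/- arXiv:2309.10368 — 2 statements merged into one kernel-verified Lean document; each statement's English description precedes it below -/
import Mathlib

section
/- Let d ≥ 2, and let Y be a d-dimensional Gaussian random vector with arbitrary mean and standard deviation σ ≤ 1. Then there is an absolute constant c > 0 such that for every interval I ⊆ ℝ of length ε, the probability that ‖Y‖² ∈ I is at most c · ε/(√d · σ²). -/
open MeasureTheory ProbabilityTheory

/-- A `d`-dimensional Gaussian random vector with mean `μ` and standard deviation `σ`,
realized as the product of `d` independent one-dimensional Gaussians, viewed as a measure
on `EuclideanSpace ℝ (Fin d)`. -/
noncomputable def gaussianVec (d : ℕ) (μ : Fin d → ℝ) (σ : ℝ) : Measure (Fin d → ℝ) :=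
  Measure.pi fun j => gaussianReal (μ j) ((σ ^ 2).toNNReal)

/-- The identification of `Fin d → ℝ` with `EuclideanSpace ℝ (Fin d)`. -/
noncomputable def toEuc {d : ℕ} (x : Fin d → ℝ) : EuclideanSpace ℝ (Fin d) :=
  (WithLp.equiv 2 (Fin d → ℝ)).symm x

lemma fourier_conc (ν : Measure ℝ) [IsProbabilityMeasure ν] (g : ℝ → ℝ) (hg : Integrable g)
    (h : ∀ s, ‖charFun ν s‖ ≤ g s) (ε : ℝ) (hε : 0 < ε) (t : ℝ) :
    ν.real (Set.Icc t (t + ε)) ≤ 3 * ε * ∫ s, g s := by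
  have hg0 : ∀ s, 0 ≤ g s := fun s => (norm_nonneg _).trans (h s)
  set w : NNReal := Real.toNNReal ((ε ^ 2)⁻¹) with hw
  have hwc : (w : ℝ) = (ε ^ 2)⁻¹ := Real.coe_toNNReal _ (by positivity)
  have hw0 : w ≠ 0 := by
    intro h0
    rw [h0] at hwc
    have : 0 < (ε ^ 2)⁻¹ := by positivity
    simp at hwc
    exact absurd hwc (by positivity)
  set γ := gaussianReal 0 w with hγ
  have h1 : ∀ x : ℝ, (Real.exp (-(x - t) ^ 2 / (2 * ε ^ 2)) : ℂ)
      = ∫ s, Complex.exp (s * (x - t : ℝ) * Complex.I) ∂γ := by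
    intro x
    have := charFun_gaussianReal (μ := 0) (v := w) (x - t)
    rw [charFun_apply_real] at this
    rw [Complex.ofReal_exp]
    calc _ = Complex.exp (↑(x - t) * ((0:ℝ):ℂ) * Complex.I - (w : ℝ) * ↑(x - t) ^ 2 / 2) := by
            rw [hwc]; congr 1; push_cast; field_simp; ring
      _ = _ := this.symm
      _ = _ := by congr 1; ext s; ring_nf
  have hsw : ∫ x, (Real.exp (-(x - t) ^ 2 / (2 * ε ^ 2)) : ℂ) ∂ν
      = ∫ s, Complex.exp (-(s * t) * Complex.I) * charFun ν s ∂γ := by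
    simp_rw [h1]
    rw [integral_integral_swap]
    · congr 1; ext s
      rw [charFun_apply_real, ← integral_const_mul]
      congr 1; ext x
      rw [← Complex.exp_add]; congr 1; push_cast; ring
    · refine Integrable.of_bound (C := 1) ?_ ?_
      · apply Continuous.aestronglyMeasurable
        unfold Function.uncurry; fun_prop
      · refine Filter.Eventually.of_forall fun p => ?_
        simp only [Function.uncurry]
        have : ((p.2 : ℂ) * ((p.1 - t : ℝ) : ℂ) * Complex.I) = ((p.2 * (p.1 - t) : ℝ) : ℂ) * Complex.I := by
          push_cast; ring
        rw [this, Complex.norm_exp_ofReal_mul_I]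
  have hpdf : ∀ s, gaussianPDFReal 0 w s ≤ ε := by
    intro s
    rw [gaussianPDFReal_def]
    have e1 : Real.exp (-(s - 0) ^ 2 / (2 * (w : ℝ))) ≤ 1 := by
      apply Real.exp_le_one_iff.2
      rw [neg_div]; simp only [Left.neg_nonpos_iff]; positivity
    have e2 : (√(2 * Real.pi * w))⁻¹ ≤ ε := by
      apply inv_le_of_inv_le₀ hε
      apply Real.le_sqrt_of_sq_le
      rw [hwc, inv_pow]
      have := Real.pi_gt_three
      have h3 : 0 < (ε ^ 2)⁻¹ := by positivity
      nlinarith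
    calc _ ≤ (√(2 * Real.pi * w))⁻¹ * 1 := mul_le_mul_of_nonneg_left e1 (by positivity)
      _ ≤ ε := by linarith
  have hub : ‖∫ s, Complex.exp (-(s * t) * Complex.I) * charFun ν s ∂γ‖ ≤ ε * ∫ s, g s := by
    rw [hγ, integral_gaussianReal_eq_integral_smul hw0, ← integral_const_mul]
    apply norm_integral_le_of_norm_le (hg.const_mul ε)
    refine Filter.Eventually.of_forall fun s => ?_
    have : (-((s : ℂ) * t) * Complex.I) = ((-(s * t) : ℝ) : ℂ) * Complex.I := by
      push_cast; ring
    rw [norm_smul, norm_mul, this, Complex.norm_exp_ofReal_mul_I, one_mul, Real.norm_eq_abs,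
      abs_of_nonneg (gaussianPDFReal_nonneg _ _ _)]
    gcongr
    · exact hpdf s
    · exact h s
  rw [← hsw, integral_complex_ofReal, Complex.norm_real, Real.norm_eq_abs] at hub
  have hub := (le_abs_self _).trans hub
  have hlow : Real.exp (-(1/2)) * ν.real (Set.Icc t (t + ε)) ≤
      ∫ x, Real.exp (-(x - t) ^ 2 / (2 * ε ^ 2)) ∂ν := by
    rw [mul_comm, ← smul_eq_mul, ← integral_indicator_const _ measurableSet_Icc]
    apply integral_mono
    · exact (integrable_const _).indicator measurableSet_Icc
    · refine Integrable.of_bound (C := 1) (by apply Continuous.aestronglyMeasurable; fun_prop) ?_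
      refine Filter.Eventually.of_forall fun x => ?_
      rw [Real.norm_eq_abs, Real.abs_exp]
      apply Real.exp_le_one_iff.2
      rw [neg_div]; simp only [Left.neg_nonpos_iff]; positivity
    · intro x
      by_cases hx : x ∈ Set.Icc t (t + ε)
      · simp only [Set.indicator_of_mem hx]
        apply Real.exp_le_exp.2
        rw [neg_div, neg_le_neg_iff, div_le_div_iff₀ (by positivity) (by norm_num)]
        have := hx.1; have := hx.2
        nlinarith
      · simp only [Set.indicator_of_notMem hx]
        positivity
  have he : (1:ℝ) / 2 ≤ Real.exp (-(1/2)) := by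
    have := Real.add_one_le_exp (-(1/2) : ℝ)
    linarith
  have hr : 0 ≤ ν.real (Set.Icc t (t + ε)) := measureReal_nonneg
  have hI : 0 ≤ ∫ s, g s := integral_nonneg hg0
  have : 0 ≤ ε * ∫ s, g s := by positivity
  nlinarith

lemma phi_bound (m : ℝ) (v : NNReal) (hv : v ≠ 0) (s : ℝ) :
    ‖∫ x, Complex.exp (s * (x:ℂ) ^ 2 * Complex.I) ∂(gaussianReal m v)‖
      ≤ (1 + 4 * v ^ 2 * s ^ 2 : ℝ) ^ (-(1/4) : ℝ) := by
  have hvp : (0:ℝ) < v := by positivity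
  rw [integral_gaussianReal_eq_integral_smul hv]
  set b : ℂ := ⟨-(1 / (2 * v)), s⟩ with hb
  have hbI : b = -(1 / (2 * (v:ℂ))) + s * Complex.I := by
    apply Complex.ext
    · have : (-(1 / (2 * (v:ℂ))) + s * Complex.I) = ((-(1 / (2 * (v:ℝ))) : ℝ) : ℂ) + s * Complex.I := by
        push_cast; rfl
      rw [this]; simp [hb]
    · have : (-(1 / (2 * (v:ℂ))) + s * Complex.I) = ((-(1 / (2 * (v:ℝ))) : ℝ) : ℂ) + s * Complex.I := by
        push_cast; rfl
      rw [this]; simp [hb]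
  have hvc : (v:ℂ) ≠ 0 := by exact_mod_cast hv
  have hbre : b.re < 0 := by simp only [hb]; have : 0 < 1 / (2 * (v:ℝ)) := by positivity
                             linarith
  have key : ∫ x : ℝ, gaussianPDFReal m v x • Complex.exp (s * (x:ℂ) ^ 2 * Complex.I)
      = ((√(2 * Real.pi * v))⁻¹ : ℝ) * ((Real.pi / -b) ^ (1/2 : ℂ)
        * Complex.exp (((-(m ^ 2 / (2 * v)) : ℝ) : ℂ) - ((m / v : ℝ) : ℂ) ^ 2 / (4 * b))) := by
    rw [← integral_cexp_quadratic hbre, ← integral_const_mul]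
    congr 1; ext x
    rw [gaussianPDFReal_def, Complex.real_smul, Complex.ofReal_mul, mul_assoc, Complex.ofReal_exp,
      ← Complex.exp_add]
    congr 2
    rw [hbI]; push_cast; field_simp; ring
  have hns : Complex.normSq b = (1 + 4 * v ^ 2 * s ^ 2) / (2 * v) ^ 2 := by
    rw [Complex.normSq_apply]; simp only [hb]; field_simp; ring
  have hnorm : ‖b‖ = (1 + 4 * v ^ 2 * s ^ 2 : ℝ) ^ (1/2 : ℝ) / (2 * v) := by
    rw [Complex.norm_def, hns, Real.sqrt_div (by positivity), Real.sqrt_sq (by positivity),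
      Real.sqrt_eq_rpow]
  have hre : (((-(m ^ 2 / (2 * v)) : ℝ) : ℂ) - ((m / v : ℝ) : ℂ) ^ 2 / (4 * b)).re ≤ 0 := by
    have e : ((m / v : ℝ) : ℂ) ^ 2 / (4 * b) = (((m / v) ^ 2 / 4 : ℝ) : ℂ) * b⁻¹ := by
      push_cast; rw [div_eq_mul_inv, mul_inv]; ring
    rw [e, Complex.sub_re, Complex.re_ofReal_mul, Complex.inv_re, hns, Complex.ofReal_re]
    simp only [hb]
    have : -(m ^ 2 / (2 * v)) - (m / v) ^ 2 / 4 * (-(1 / (2 * (v:ℝ))) / ((1 + 4 * v ^ 2 * s ^ 2) / (2 * v) ^ 2))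
       = - (m ^ 2 / (2 * v) * (1 - 1 / (1 + 4 * v ^ 2 * s ^ 2))) := by
      field_simp; ring
    rw [this]
    have h1 : 1 / (1 + 4 * v ^ 2 * s ^ 2 : ℝ) ≤ 1 := by
      rw [div_le_one (by positivity)]
      have : (0:ℝ) ≤ 4 * v ^ 2 * s ^ 2 := by positivity
      linarith
    have : 0 ≤ m ^ 2 / (2 * v) * (1 - 1 / (1 + 4 * v ^ 2 * s ^ 2 : ℝ)) :=
      mul_nonneg (by positivity) (by linarith)
    linarith
  rw [key, norm_mul, norm_mul, Complex.norm_exp, Complex.norm_real]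
  have h12 : (1/2 : ℂ) = ((1/2 : ℝ) : ℂ) := by push_cast; rfl
  rw [h12, Complex.norm_cpow_real, norm_div, norm_neg, hnorm, Complex.norm_real,
    Real.norm_of_nonneg Real.pi_pos.le, Real.norm_of_nonneg (by positivity)]
  set q : ℝ := 1 + 4 * v ^ 2 * s ^ 2 with hq
  have hq0 : 0 < q := by positivity
  have e2 : Real.pi / (q ^ (1/2:ℝ) / (2 * v)) = (2 * Real.pi * v) * q ^ (-(1/2) : ℝ) := by
    rw [Real.rpow_neg hq0.le]; field_simp
  rw [e2, Real.mul_rpow (by positivity) (by positivity), ← Real.rpow_mul hq0.le, ← Real.sqrt_eq_rpow]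
  have hs : 0 < √(2 * Real.pi * v) := by positivity
  have hexp := Real.exp_le_one_iff.2 hre
  calc _ = q ^ (-(1/2) * (1/2) : ℝ) * Real.exp _ := by
        rw [← mul_assoc, ← mul_assoc, inv_mul_cancel₀ hs.ne', one_mul]
    _ ≤ q ^ (-(1/2) * (1/2) : ℝ) * 1 := by gcongr
    _ = _ := by norm_num

lemma high_dim (d : ℕ) (hd : 4 ≤ d) (μ : Fin d → ℝ) (v : NNReal) (hv : v ≠ 0)
    (ε : ℝ) (hε : 0 < ε) (t : ℝ) :
    (Measure.pi fun j => gaussianReal (μ j) v) {y : Fin d → ℝ | ∑ i, y i ^ 2 ∈ Set.Icc t (t + ε)}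
      ≤ ENNReal.ofReal (10 * ε / (√d * v)) := by
  have hvp : (0:ℝ) < v := by positivity
  have hdp : (0:ℝ) < d := by positivity
  set P := Measure.pi fun j => gaussianReal (μ j) v with hP
  have hR : Measurable (fun y : Fin d → ℝ => ∑ i, y i ^ 2) := by fun_prop
  set ν := P.map (fun y : Fin d → ℝ => ∑ i, y i ^ 2) with hν
  have : IsProbabilityMeasure ν := Measure.isProbabilityMeasure_map hR.aemeasurable
  have hch : ∀ s, ‖charFun ν s‖ ≤ (1 + (√d * v * s) ^ 2)⁻¹ := by
    intro s
    rw [charFun_apply_real, hν, integral_map hR.aemeasurable (by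
      apply Continuous.aestronglyMeasurable; fun_prop)]
    have : ∀ y : Fin d → ℝ, Complex.exp (s * ((∑ i, y i ^ 2 : ℝ) : ℂ) * Complex.I)
        = ∏ i, Complex.exp (s * (y i : ℂ) ^ 2 * Complex.I) := by
      intro y
      rw [← Complex.exp_sum]; push_cast
      rw [Finset.mul_sum, Finset.sum_mul]
    simp_rw [this]
    rw [hP, integral_fintype_prod_eq_prod (f := fun _ (x : ℝ) => Complex.exp (s * (x : ℂ) ^ 2 * Complex.I)),
      norm_prod]
    have hq0 : (0:ℝ) < 1 + 4 * v ^ 2 * s ^ 2 := by positivity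
    calc _ ≤ ∏ i : Fin d, (1 + 4 * v ^ 2 * s ^ 2 : ℝ) ^ (-(1/4) : ℝ) :=
          Finset.prod_le_prod (fun _ _ => norm_nonneg _) (fun i _ => phi_bound _ _ hv s)
      _ = ((1 + 4 * v ^ 2 * s ^ 2 : ℝ) ^ ((d:ℝ)/4))⁻¹ := by
          rw [Finset.prod_const, Finset.card_univ, Fintype.card_fin, ← Real.rpow_natCast,
            ← Real.rpow_mul hq0.le, ← Real.rpow_neg hq0.le]
          congr 1; ring
      _ ≤ _ := by
          apply inv_anti₀ (by positivity)
          have hd' : (4:ℝ) ≤ d := by exact_mod_cast hd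
          have hx : (0:ℝ) ≤ 4 * v ^ 2 * s ^ 2 := by positivity
          have := one_add_mul_self_le_rpow_one_add (s := 4 * v ^ 2 * s ^ 2) (by linarith)
            (p := (d:ℝ)/4) (by linarith)
          refine le_trans (le_of_eq ?_) this
          rw [mul_pow, mul_pow, Real.sq_sqrt hdp.le]; ring
  have hk : √d * v ≠ 0 := by positivity
  have hint : Integrable (fun s : ℝ => (1 + (√d * v * s) ^ 2)⁻¹) :=
    integrable_inv_one_add_sq.comp_mul_left' hk
  have hval : ∫ s : ℝ, (1 + (√d * v * s) ^ 2)⁻¹ = (√d * v)⁻¹ * Real.pi := by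
    rw [Measure.integral_comp_mul_left (fun x : ℝ => (1 + x ^ 2)⁻¹), integral_univ_inv_one_add_sq,
      abs_of_nonneg (by positivity), smul_eq_mul]
  have main := fourier_conc ν _ hint hch ε hε t
  rw [hval] at main
  have e : P {y : Fin d → ℝ | ∑ i, y i ^ 2 ∈ Set.Icc t (t + ε)} = ν (Set.Icc t (t + ε)) := by
    rw [hν, Measure.map_apply hR measurableSet_Icc]; rfl
  rw [e, ← ofReal_measureReal]
  apply ENNReal.ofReal_le_ofReal
  refine main.trans ?_
  have hpi := Real.pi_lt_d2
  have : 3 * ε * ((√d * v)⁻¹ * Real.pi) = (3 * Real.pi) * ε / (√d * v) := by field_simp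
  rw [this]
  gcongr
  linarith

lemma vol_annulus (ε t : ℝ) (hε : 0 ≤ ε) :
    volume {y : Fin 2 → ℝ | ∑ i, y i ^ 2 ∈ Set.Icc t (t + ε)} ≤ ENNReal.ofReal (Real.pi * ε) := by
  have hs : ∀ x, ENNReal.ofReal (√x) ^ 2 = ENNReal.ofReal x := by
    intro x
    rcases le_total 0 x with h | h
    · rw [← ENNReal.ofReal_pow (Real.sqrt_nonneg _), Real.sq_sqrt h]
    · rw [Real.sqrt_eq_zero_of_nonpos h, ENNReal.ofReal_of_nonpos h]; simp
  have hmp := PiLp.volume_preserving_toLp (Fin 2)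
  have hsub : {y : Fin 2 → ℝ | ∑ i, y i ^ 2 ∈ Set.Icc t (t + ε)} ⊆
      (WithLp.toLp 2) ⁻¹' (Metric.closedBall (0 : EuclideanSpace ℝ (Fin 2)) (√(t + ε))
        \ Metric.ball 0 (√t)) := by
    intro y hy
    have hn : ‖(WithLp.toLp 2 y : EuclideanSpace ℝ (Fin 2))‖ ^ 2 = ∑ i, y i ^ 2 := by
      rw [EuclideanSpace.norm_sq_eq]; simp
    simp only [Set.mem_setOf_eq, ← hn] at hy
    simp only [Set.mem_preimage, Set.mem_diff, Metric.mem_closedBall, dist_zero_right,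
      Metric.mem_ball, not_lt]
    exact ⟨(le_abs_self _).trans (Real.abs_le_sqrt hy.2), Real.sqrt_le_iff.2 ⟨norm_nonneg _, hy.1⟩⟩
  refine (measure_mono hsub).trans ?_
  rw [hmp.measure_preimage (Metric.isClosed_closedBall.measurableSet.diff
    Metric.isOpen_ball.measurableSet).nullMeasurableSet,
    measure_diff ?_ Metric.isOpen_ball.measurableSet.nullMeasurableSet ?_,
    EuclideanSpace.volume_ball_fin_two, EuclideanSpace.volume_closedBall_fin_two, hs, hs,
    ← ENNReal.sub_mul (by simp), mul_comm Real.pi, ENNReal.ofReal_mul hε]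
  · gcongr
    rw [tsub_le_iff_left]
    exact ENNReal.ofReal_add_le
  · exact Metric.ball_subset_closedBall.trans
      (Metric.closedBall_subset_closedBall (Real.sqrt_le_sqrt (by linarith)))
  · exact measure_ball_lt_top.ne

lemma gaussianReal_le (m : ℝ) (v : NNReal) (hv : v ≠ 0) :
    gaussianReal m v ≤ ENNReal.ofReal ((√(2 * Real.pi * v))⁻¹) • volume := by
  rw [gaussianReal_of_var_ne_zero _ hv, ← withDensity_const]
  apply withDensity_mono
  refine Filter.Eventually.of_forall fun x => ?_
  apply ENNReal.ofReal_le_ofReal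
  rw [gaussianPDFReal_def]
  have e1 : Real.exp (-(x - m) ^ 2 / (2 * (v : ℝ))) ≤ 1 := by
    apply Real.exp_le_one_iff.2
    rw [neg_div]; simp only [Left.neg_nonpos_iff]; positivity
  calc _ ≤ (√(2 * Real.pi * v))⁻¹ * 1 := mul_le_mul_of_nonneg_left e1 (by positivity)
    _ = _ := mul_one _

lemma dim_two (μ : Fin 2 → ℝ) (v : NNReal) (hv : v ≠ 0) (ε : ℝ) (hε : 0 ≤ ε) (t : ℝ) :
    (Measure.pi fun j => gaussianReal (μ j) v) {y : Fin 2 → ℝ | ∑ i, y i ^ 2 ∈ Set.Icc t (t + ε)}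
      ≤ ENNReal.ofReal (ε / (2 * v)) := by
  have hvp : (0:ℝ) < v := by positivity
  set S := {y : Fin 2 → ℝ | ∑ i, y i ^ 2 ∈ Set.Icc t (t + ε)} with hS
  have hR : Measurable (fun y : Fin 2 → ℝ => ∑ i, y i ^ 2) := by fun_prop
  have hSm : MeasurableSet S := hR measurableSet_Icc
  set e := MeasurableEquiv.piFinTwo (fun _ : Fin 2 => ℝ) with he
  set K := ENNReal.ofReal ((√(2 * Real.pi * v))⁻¹) with hK
  have h1 := measurePreserving_piFinTwo (fun j => gaussianReal (μ j) v)
  have h2 := volume_preserving_piFinTwo (fun _ : Fin 2 => ℝ)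
  have hSe : S = e ⁻¹' (e.symm ⁻¹' S) := by rw [← Set.preimage_comp]; simp
  have hSm' : MeasurableSet (e.symm ⁻¹' S) := e.symm.measurable hSm
  rw [hSe, h1.measure_preimage hSm'.nullMeasurableSet]
  calc _ ≤ ((K • volume : Measure ℝ).prod (K • volume : Measure ℝ)) (e.symm ⁻¹' S) :=
        Measure.prod_mono (gaussianReal_le _ _ hv) (gaussianReal_le _ _ hv) _
    _ = K * (K * volume (e.symm ⁻¹' S)) := by
        rw [Measure.prod_smul_left, Measure.prod_smul_right]; rfl
    _ = K * (K * volume S) := by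
        rw [← h2.measure_preimage hSm'.nullMeasurableSet, ← hSe]
    _ ≤ K * (K * ENNReal.ofReal (Real.pi * ε)) := by gcongr; exact vol_annulus ε t hε
    _ = _ := by
        rw [hK, ← ENNReal.ofReal_mul (by positivity), ← ENNReal.ofReal_mul (by positivity)]
        congr 1
        rw [← mul_assoc, ← mul_inv, Real.mul_self_sqrt (by positivity)]
        field_simp

lemma low_dim (n : ℕ) (v : NNReal) (hv : v ≠ 0) (ε : ℝ) (hε : 0 ≤ ε) :
    ∀ (μ : Fin (n + 2) → ℝ) (t : ℝ),
    (Measure.pi fun j => gaussianReal (μ j) v)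
      {y : Fin (n + 2) → ℝ | ∑ i, y i ^ 2 ∈ Set.Icc t (t + ε)}
      ≤ ENNReal.ofReal (ε / (2 * v)) := by
  induction n with
  | zero => intro μ t; exact dim_two μ v hv ε hε t
  | succ n ih =>
    intro μ t
    have h1 := measurePreserving_piFinSuccAbove (fun j => gaussianReal (μ j) v) 0
    set e := MeasurableEquiv.piFinSuccAbove (fun _ : Fin (n + 1 + 2) => ℝ) 0 with he
    set T : Set (ℝ × (Fin (n + 2) → ℝ)) := {p | p.1 ^ 2 + ∑ i, p.2 i ^ 2 ∈ Set.Icc t (t + ε)} with hT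
    have hR : Measurable (fun p : ℝ × (Fin (n + 2) → ℝ) => p.1 ^ 2 + ∑ i, p.2 i ^ 2) := by fun_prop
    have hTm : MeasurableSet T := hR measurableSet_Icc
    have hSe : {y : Fin (n + 1 + 2) → ℝ | ∑ i, y i ^ 2 ∈ Set.Icc t (t + ε)} = e ⁻¹' T := by
      ext y
      simp only [Set.mem_setOf_eq, Set.mem_preimage, hT]
      rw [Fin.sum_univ_succ]
      rfl
    rw [hSe, h1.measure_preimage hTm.nullMeasurableSet, Measure.prod_apply hTm]
    calc _ ≤ ∫⁻ _, ENNReal.ofReal (ε / (2 * v)) ∂(gaussianReal (μ 0) v) := by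
          apply lintegral_mono
          intro x
          refine le_trans (measure_mono ?_) (ih (fun j => μ (Fin.succAbove 0 j)) (t - x ^ 2))
          intro z hz
          have := hz.1; have := hz.2
          simp only at *
          exact ⟨by linarith, by linarith⟩
      _ = _ := by simp

/-- Let `d ≥ 2` and let `Y` be a `d`-dimensional Gaussian random vector with
arbitrary mean and standard deviation `σ ≤ 1`. There is an absolute constant `c > 0` such that
for every interval `I` of length `ε`, `ℙ(‖Y‖² ∈ I) ≤ c·ε/(√d·σ²)`. -/
theorem norm_sq_gaussian_interval :
    ∃ c : ℝ, 0 < c ∧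
      ∀ (d : ℕ), 2 ≤ d →
        ∀ (μ : Fin d → ℝ) (σ : ℝ), 0 < σ → σ ≤ 1 →
          ∀ ε : ℝ, 0 ≤ ε →
            ∀ t : ℝ,
              gaussianVec d μ σ {y : Fin d → ℝ | ‖toEuc y‖ ^ 2 ∈ Set.Icc t (t + ε)}
                ≤ ENNReal.ofReal (c * ε / (Real.sqrt d * σ ^ 2)) := by
  refine ⟨10, by norm_num, ?_⟩
  intro d hd μ σ hσ _ ε hε t
  have hvc : (((σ ^ 2).toNNReal : NNReal) : ℝ) = σ ^ 2 := Real.coe_toNNReal _ (by positivity)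
  have hv : (σ ^ 2).toNNReal ≠ 0 := by
    intro h0
    rw [h0] at hvc
    have : 0 < σ ^ 2 := by positivity
    rw [← hvc] at this
    simp at this
  have hn : ∀ y : Fin d → ℝ, ‖toEuc y‖ ^ 2 = ∑ i, y i ^ 2 := by
    intro y
    rw [EuclideanSpace.norm_sq_eq]; simp [toEuc]
  simp_rw [hn, gaussianVec]
  have hdp : (0:ℝ) < d := by
    have : 0 < d := by omega
    exact_mod_cast this
  rcases le_or_gt 4 d with h4 | h4
  · have hpos : ∀ δ : ℝ, 0 < δ → (Measure.pi fun j => gaussianReal (μ j) (σ ^ 2).toNNReal)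
        {y : Fin d → ℝ | ∑ i, y i ^ 2 ∈ Set.Icc t (t + ε)}
        ≤ ENNReal.ofReal (10 * (ε + δ) / (√d * σ ^ 2)) := by
      intro δ hδ
      have h := high_dim d h4 μ _ hv (ε + δ) (by linarith) t
      rw [hvc] at h
      refine le_trans (measure_mono ?_) h
      intro y hy
      exact ⟨hy.1, hy.2.trans (by linarith)⟩
    have hlim : Filter.Tendsto (fun δ : ℝ => ENNReal.ofReal (10 * (ε + δ) / (√d * σ ^ 2)))
        (nhdsWithin 0 (Set.Ioi 0)) (nhds (ENNReal.ofReal (10 * ε / (√d * σ ^ 2)))) := by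
      have hc : Continuous (fun δ : ℝ => ENNReal.ofReal (10 * (ε + δ) / (√d * σ ^ 2))) := by
        apply ENNReal.continuous_ofReal.comp
        fun_prop
      have := hc.tendsto 0
      rw [add_zero] at this
      exact this.mono_left nhdsWithin_le_nhds
    exact ge_of_tendsto hlim (Filter.eventually_of_mem self_mem_nhdsWithin fun δ hδ => hpos δ hδ)
  · obtain ⟨n, rfl⟩ : ∃ n, d = n + 2 := ⟨d - 2, by omega⟩
    refine (low_dim n _ hv ε hε μ t).trans ?_
    apply ENNReal.ofReal_le_ofReal
    rw [hvc]
    have hs : √((n + 2 : ℕ) : ℝ) ≤ 2 := by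
      apply Real.sqrt_le_iff.2 ⟨by norm_num, ?_⟩
      have : ((n + 2 : ℕ) : ℝ) ≤ (4 : ℕ) := by exact_mod_cast h4.le
      norm_num at this ⊢
      linarith
    have hs0 : 0 < √((n + 2 : ℕ) : ℝ) := Real.sqrt_pos.2 hdp
    calc ε / (2 * σ ^ 2) ≤ ε / (√((n + 2 : ℕ) : ℝ) * σ ^ 2) := by gcongr
      _ ≤ _ := by gcongr; linarith
end

section
/- Fix a, b ∈ ℝ^d and cluster sizes s ∈ {2, …, n} and t ∈ {1, …, n}, and let x be a d-dimensional Gaussian random vector with arbitrary mean and standard deviation σ ≤ 1. Define Δ_x(a, b) = (s/(s−1))‖x − a‖² − (t/(t+1))‖x − b‖². Then there is an absolute constant c > 0 such that for every interval I of length ε ≤ 1, the probability that Δ_x(a, b) ∈ I is at most c · (n/d^{1/4}) · √(ε/σ²). -/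
open MeasureTheory ProbabilityTheory

/-- The gain `Δ_x(a, b) = (s/(s−1))·‖x − a‖² − (t/(t+1))·‖x − b‖²` of the Hartigan--Wong
method when moving `x` from a cluster of size `s` with center `a` to a cluster of size `t`
with center `b`. -/
noncomputable def gainFixedCenters {d : ℕ} (s t : ℕ) (x a b : EuclideanSpace ℝ (Fin d)) : ℝ :=
  (s : ℝ) / ((s : ℝ) - 1) * ‖x - a‖ ^ 2 - (t : ℝ) / ((t : ℝ) + 1) * ‖x - b‖ ^ 2

/-- The function `|u|^{-1/2}` is integrable for the standard Gaussian. -/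
lemma integrable_inv_sqrt_abs :
    Integrable (fun u : ℝ => (√|u|)⁻¹) (gaussianReal 0 1) := by
  have h1 : Integrable (fun x : ℝ => (‖x‖ ^ (-(1/2) : ℝ) * Real.exp (-(1/2) * ‖x‖ ^ 2))) := by
    rw [integrable_fun_norm_addHaar (μ := volume)
      (f := fun x : ℝ => x ^ (-(1/2) : ℝ) * Real.exp (-(1/2) * x ^ 2))]
    simpa using integrableOn_rpow_mul_exp_neg_mul_sq (b := 1/2) (by norm_num)
      (s := -(1/2)) (by norm_num)
  rw [gaussianReal_of_var_ne_zero 0 one_ne_zero,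
    integrable_withDensity_iff_integrable_smul' (measurable_gaussianPDF _ _)
      (ae_of_all _ fun _ ↦ gaussianPDF_lt_top)]
  refine (h1.const_mul (√(2 * Real.pi))⁻¹).congr (ae_of_all _ fun x => ?_)
  simp only [toReal_gaussianPDF, gaussianPDFReal, smul_eq_mul, Real.norm_eq_abs, sq_abs]
  rw [Real.rpow_neg (abs_nonneg _), ← Real.sqrt_eq_rpow]
  have : -(x - 0) ^ 2 / (2 * ((1 : NNReal) : ℝ)) = -(1/2) * x ^ 2 := by push_cast; ring
  rw [this]
  push_cast
  ring

lemma norm_char_quad_one (m z w : ℝ) (v : NNReal) (hv : v ≠ 0) :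
    ‖∫ x : ℝ, Complex.exp (((w * (x - z) ^ 2 : ℝ) : ℂ) * Complex.I) ∂gaussianReal m v‖
      ≤ (√√(1 + 4 * (v : ℝ) ^ 2 * w ^ 2))⁻¹ := by
  have hv0 : (0 : ℝ) < v := by positivity
  rw [integral_gaussianReal_eq_integral_smul hv]
  set b : ℂ := -(1 / (2 * (v : ℝ)) : ℝ) + (w : ℝ) * Complex.I with hb
  set c : ℂ := (((m - z) / v : ℝ) : ℂ) with hc
  set d : ℂ := ((-(m - z) ^ 2 / (2 * v) : ℝ) : ℂ) with hd
  have hvc : (v : ℂ) ≠ 0 := by exact_mod_cast hv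
  have hvc' : ((v : ℝ) : ℂ) ≠ 0 := by exact_mod_cast hv0.ne'
  have hint : ∀ x : ℝ, gaussianPDFReal m v x •
      Complex.exp (((w * (x - z) ^ 2 : ℝ) : ℂ) * Complex.I) =
      (((√(2 * Real.pi * v))⁻¹ : ℝ) : ℂ) * 
        (fun y : ℝ => Complex.exp (b * y ^ 2 + c * y + d)) (x - z) := by
    intro x
    simp only [gaussianPDFReal, Complex.real_smul]
    rw [Complex.ofReal_mul, mul_assoc, Complex.ofReal_exp, ← Complex.exp_add]
    congr 2
    simp only [hb, hc, hd]
    push_cast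
    field_simp
    ring
  simp_rw [hint]
  rw [integral_const_mul, integral_sub_right_eq_self
    (fun y : ℝ => Complex.exp (b * y ^ 2 + c * y + d)) z]
  have hbre : b.re = -(1 / (2 * (v : ℝ))) := by simp [hb]
  have hbim : b.im = w := by simp [hb]
  have hbneg : b.re < 0 := by rw [hbre]; simp; positivity
  have hb0 : b ≠ 0 := by intro h; simp [h] at hbneg
  rw [integral_cexp_quadratic hbneg, norm_mul, norm_mul]
  have hnsq : ‖b‖ ^ 2 = (1 / (2 * (v : ℝ))) ^ 2 + w ^ 2 := by
    rw [Complex.sq_norm, Complex.normSq_apply, hbre, hbim]; ring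
  have hN : 2 * v * ‖b‖ = √(1 + 4 * (v : ℝ) ^ 2 * w ^ 2) := by
    symm
    rw [Real.sqrt_eq_iff_mul_self_eq (by positivity) (by positivity)]
    have : 2 * v * ‖b‖ * (2 * v * ‖b‖) = 4 * (v : ℝ) ^ 2 * ‖b‖ ^ 2 := by ring
    rw [this, hnsq]
    field_simp
    ring
  have hexp : ‖Complex.exp (d - c ^ 2 / (4 * b))‖ ≤ 1 := by
    rw [Complex.norm_exp, Real.exp_le_one_iff]
    have e1 : d - c ^ 2 / (4 * b) = ((-(m - z) ^ 2 / (2 * v) : ℝ) : ℂ) 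
        - ((((m - z) / v) ^ 2 / 4 : ℝ) : ℂ) * b⁻¹ := by
      simp only [hc, hd]; push_cast; field_simp
    rw [e1, Complex.sub_re, Complex.re_ofReal_mul, Complex.ofReal_re, Complex.inv_re, hbre,
      ← Complex.sq_norm, hnsq]
    have e2 : (1 / (2 * (v : ℝ))) / ((1 / (2 * (v : ℝ))) ^ 2 + w ^ 2) ≤ 2 * v := by
      rw [div_le_iff₀ (by positivity)]
      have : 2 * (v : ℝ) * ((1 / (2 * (v : ℝ))) ^ 2 + w ^ 2) = 1 / (2 * v) + 2 * v * w ^ 2 := by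
        field_simp
      rw [this]
      have : 0 ≤ 2 * v * w ^ 2 := by positivity
      linarith
    have e3 := mul_le_mul_of_nonneg_left e2 (show 0 ≤ ((m - z) / v) ^ 2 / 4 by positivity)
    have e4 : ((m - z) / v) ^ 2 / 4 * (2 * v) = (m - z) ^ 2 / (2 * v) := by field_simp; ring
    rw [e4] at e3
    rw [neg_div, neg_div]
    linarith
  have hpow : ‖((Real.pi : ℂ) / -b) ^ (1 / 2 : ℂ)‖ = √(Real.pi / ‖b‖) := by
    have : (1 / 2 : ℂ) = ((1 / 2 : ℝ) : ℂ) := by push_cast; rfl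
    rw [this, Complex.norm_cpow_real, norm_div, norm_neg, Complex.norm_real,
      Real.norm_of_nonneg Real.pi_pos.le, Real.sqrt_eq_rpow]
  rw [hpow, Complex.norm_real, Real.norm_of_nonneg (by positivity), ← hN]
  have hbn : 0 < ‖b‖ := norm_pos_iff.mpr hb0
  have hfin : (√(2 * Real.pi * v))⁻¹ * √(Real.pi / ‖b‖) = (√(2 * v * ‖b‖))⁻¹ := by
    rw [← Real.sqrt_inv, ← Real.sqrt_inv, ← Real.sqrt_mul (by positivity)]
    congr 1
    field_simp
  rw [← mul_assoc, hfin]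
  exact mul_le_of_le_one_right (by positivity) hexp

lemma norm_char_quad (d : ℕ) (hd : 0 < d) (μ z : Fin d → ℝ) (σ w : ℝ) (hσ : 0 < σ)
    (hw : w ≠ 0) :
    ‖∫ x : Fin d → ℝ, Complex.exp (((w * ∑ j, (x j - z j) ^ 2 : ℝ) : ℂ) * Complex.I)
      ∂gaussianVec d μ σ‖ ≤ (√(√d * σ ^ 2 * |w|))⁻¹ := by
  have h1 : ∀ x : Fin d → ℝ, 
      Complex.exp (((w * ∑ j, (x j - z j) ^ 2 : ℝ) : ℂ) * Complex.I) =
      ∏ j, (fun (j : Fin d) (y : ℝ) =>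
        Complex.exp (((w * (y - z j) ^ 2 : ℝ) : ℂ) * Complex.I)) j (x j) := by
    intro x
    rw [← Complex.exp_sum, Finset.mul_sum]
    push_cast
    rw [Finset.sum_mul]
  rw [integral_congr_ae (ae_of_all _ h1), gaussianVec, integral_fintype_prod_eq_prod
    (fun (j : Fin d) (y : ℝ) => Complex.exp (((w * (y - z j) ^ 2 : ℝ) : ℂ) * Complex.I)),
    norm_prod]
  have hv : (σ ^ 2).toNNReal ≠ 0 := by
    have : 0 < (σ ^ 2).toNNReal := Real.toNNReal_pos.mpr (by positivity)
    exact this.ne'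
  have hvc : (((σ ^ 2).toNNReal : NNReal) : ℝ) = σ ^ 2 := Real.coe_toNNReal _ (by positivity)
  calc _ ≤ ∏ j : Fin d, (√√(1 + 4 * (σ ^ 2) ^ 2 * w ^ 2))⁻¹ := by
        refine Finset.prod_le_prod (fun _ _ => norm_nonneg _) fun j _ => ?_
        have := norm_char_quad_one (μ j) (z j) w _ hv
        rwa [hvc] at this
    _ = ((√√(1 + 4 * (σ ^ 2) ^ 2 * w ^ 2)) ^ d)⁻¹ := by simp
    _ ≤ _ := by
        have hw' : 0 < |w| := abs_pos.mpr hw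
        have hd' : (0 : ℝ) < d := by exact_mod_cast hd
        apply inv_anti₀ (by positivity)
        apply Real.sqrt_le_iff.mpr
        refine ⟨by positivity, ?_⟩
        rw [pow_right_comm, Real.sq_sqrt (by positivity)]
        refine (sq_le_sq₀ (by positivity) (by positivity)).mp ?_
        rw [pow_right_comm, Real.sq_sqrt (by positivity)]
        have hb := one_add_mul_le_pow (a := 4 * (σ ^ 2) ^ 2 * w ^ 2)
          (le_trans (by norm_num) (by positivity : (0:ℝ) ≤ _)) d
        refine le_trans ?_ hb
        rw [mul_pow, mul_pow, Real.sq_sqrt hd'.le, sq_abs]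
        have : 0 ≤ d * ((σ ^ 2) ^ 2 * w ^ 2) := by positivity
        nlinarith

lemma esseen {Ω : Type*} [MeasurableSpace Ω] (P : Measure Ω) [IsProbabilityMeasure P]
    (Y : Ω → ℝ) (hY : Measurable Y) (M : ℝ)
    (hM : ∀ w : ℝ, w ≠ 0 → 
      ‖∫ x, Complex.exp (((w * Y x : ℝ) : ℂ) * Complex.I) ∂P‖ ≤ M * (√|w|)⁻¹)
    (r δ : ℝ) (hδ : 0 < δ) :
    P {x | Y x ∈ Set.Icc r (r + δ)} ≤ ENNReal.ofReal
      (Real.exp (1/2) * (∫ u, (√|u|)⁻¹ ∂gaussianReal 0 1) * (M * √δ)) := by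
  set S := {x | Y x ∈ Set.Icc r (r + δ)} with hS
  have hSm : MeasurableSet S := hY measurableSet_Icc
  rw [← ofReal_measureReal]
  apply ENNReal.ofReal_le_ofReal
  set E : Ω → ℝ := fun x => Real.exp (-((Y x - r) / δ) ^ 2 / 2) with hE
  have hEm : Measurable E := by fun_prop
  have hEi : Integrable E P := by
    refine Integrable.of_bound hEm.aestronglyMeasurable 1 (ae_of_all _ fun x => ?_)
    rw [Real.norm_of_nonneg (Real.exp_pos _).le, Real.exp_le_one_iff]
    have : 0 ≤ ((Y x - r) / δ) ^ 2 := by positivity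
    linarith
  have step1 : P.real S ≤ Real.exp (1/2) * ∫ x, E x ∂P := by
    rw [← integral_indicator_one hSm, ← integral_const_mul]
    refine integral_mono ((integrable_const (1:ℝ)).indicator hSm) (hEi.const_mul _) fun x => ?_
    by_cases hx : x ∈ S
    · simp only [Set.indicator_of_mem hx, Pi.one_apply, hE]
      rw [← Real.exp_add]
      apply Real.one_le_exp
      have h0 : 0 ≤ (Y x - r) / δ := div_nonneg (by linarith [hx.1]) hδ.le
      have h1 : (Y x - r) / δ ≤ 1 := by rw [div_le_one hδ]; linarith [hx.2]
      nlinarith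
    · simp only [Set.indicator_of_notMem hx]
      positivity
  have step2 : ((∫ x, E x ∂P : ℝ) : ℂ) = ∫ u, ∫ x,
      Complex.exp ((((Y x - r) / δ : ℝ) : ℂ) * (u : ℝ) * Complex.I) ∂P ∂gaussianReal 0 1 := by
    rw [integral_integral_swap]
    · rw [← integral_complex_ofReal]
      congr 1
      ext x
      rw [← charFun_apply_real, charFun_gaussianReal]
      simp only [hE]
      push_cast
      congr 1
      ring
    · refine Integrable.of_bound (by
        apply Measurable.aestronglyMeasurable
        simp only [Function.uncurry_def]
        fun_prop) 1 (ae_of_all _ fun p => ?_)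
      simp only [Function.uncurry_def]
      rw [← Complex.ofReal_mul, Complex.norm_exp_ofReal_mul_I]
  have step3 : ∫ x, E x ∂P ≤ ∫ u, M * √δ * (√|u|)⁻¹ ∂gaussianReal 0 1 := by
    have e0 : 0 ≤ ∫ x, E x ∂P := integral_nonneg fun x => (Real.exp_pos _).le
    have e1 : ∫ x, E x ∂P = ‖((∫ x, E x ∂P : ℝ) : ℂ)‖ := by
      rw [Complex.norm_real, Real.norm_of_nonneg e0]
    rw [e1, step2]
    refine norm_integral_le_of_norm_le (integrable_inv_sqrt_abs.const_mul _) ?_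
    have hna := nullSingletonClass_gaussianReal (μ := 0) (v := 1) one_ne_zero
    have hne : ∀ᵐ u ∂(gaussianReal 0 1), u ≠ 0 := by
      have h0 : gaussianReal 0 1 {(0 : ℝ)} = 0 := measure_singleton 0
      simp [ae_iff, h0]
    filter_upwards [hne] with u hu
    have e2 : ∀ x, Complex.exp ((((Y x - r) / δ : ℝ) : ℂ) * (u : ℝ) * Complex.I) =
        Complex.exp (((-(u * r / δ) : ℝ) : ℂ) * Complex.I) *
          Complex.exp ((((u / δ) * Y x : ℝ) : ℂ) * Complex.I) := by
      intro x
      rw [← Complex.exp_add]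
      congr 1
      push_cast
      ring
    simp_rw [e2]
    rw [integral_const_mul, norm_mul, Complex.norm_exp_ofReal_mul_I, one_mul]
    refine (hM (u / δ) (div_ne_zero hu hδ.ne')).trans (le_of_eq ?_)
    rw [abs_div, abs_of_pos hδ, Real.sqrt_div (abs_nonneg _), inv_div]
    ring
  rw [integral_const_mul] at step3
  calc _ ≤ _ := step1
    _ ≤ Real.exp (1/2) * (M * √δ * ∫ u, (√|u|)⁻¹ ∂gaussianReal 0 1) := by gcongr
    _ = _ := by ring

lemma gain_eq {d : ℕ} (A B : ℝ) (hAB : A - B ≠ 0) (x : Fin d → ℝ)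
    (a b : EuclideanSpace ℝ (Fin d)) :
    A * ‖toEuc x - a‖ ^ 2 - B * ‖toEuc x - b‖ ^ 2 =
      (A - B) * ∑ j, (x j - (A * a j - B * b j) / (A - B)) ^ 2 +
        ∑ j, (A * a j ^ 2 - B * b j ^ 2 - (A * a j - B * b j) ^ 2 / (A - B)) := by
  rw [EuclideanSpace.real_norm_sq_eq, EuclideanSpace.real_norm_sq_eq, Finset.mul_sum,
    Finset.mul_sum, Finset.mul_sum, ← Finset.sum_sub_distrib, ← Finset.sum_add_distrib]
  refine Finset.sum_congr rfl fun j _ => ?_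
  have h1 : (toEuc x - a) j = x j - a j := rfl
  have h2 : (toEuc x - b) j = x j - b j := rfl
  rw [h1, h2]
  field_simp
  ring

lemma main_pos (n d : ℕ) (hd : 0 < d) (s t : ℕ) (hs : 2 ≤ s) (hsn : s ≤ n) (ht : 1 ≤ t)
    (a b : EuclideanSpace ℝ (Fin d)) (μ : Fin d → ℝ) (σ : ℝ) (hσ : 0 < σ)
    (ε : ℝ) (hε : 0 < ε) (r : ℝ) :
    gaussianVec d μ σ {x : Fin d → ℝ | gainFixedCenters s t (toEuc x) a b ∈ Set.Icc r (r + ε)}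
      ≤ ENNReal.ofReal
        ((Real.exp (1/2) * (∫ u, (√|u|)⁻¹ ∂gaussianReal 0 1) + 1) *
          ((n : ℝ) / (d : ℝ) ^ ((1 : ℝ) / 4)) * Real.sqrt (ε / σ ^ 2)) := by
  set A : ℝ := (s : ℝ) / ((s : ℝ) - 1) with hA
  set B : ℝ := (t : ℝ) / ((t : ℝ) + 1) with hB
  have hs2 : (2 : ℝ) ≤ s := by exact_mod_cast hs
  have hsn' : (s : ℝ) ≤ n := by exact_mod_cast hsn
  have hn : (2 : ℝ) ≤ n := hs2.trans hsn'
  have hd' : (0 : ℝ) < d := by exact_mod_cast hd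
  have hl : 1 / (n : ℝ) ≤ A - B := by
    have h1 : A = 1 + 1 / ((s : ℝ) - 1) := by
      rw [hA]; field_simp [show (s : ℝ) - 1 ≠ 0 by linarith]; ring
    have h2 : B ≤ 1 := by rw [hB, div_le_one (by positivity)]; linarith
    have h3 : 1 / (n : ℝ) ≤ 1 / ((s : ℝ) - 1) := 
      one_div_le_one_div_of_le (by linarith) (by linarith)
    linarith
  have hl0 : 0 < A - B := lt_of_lt_of_le (by positivity) hl
  set z : Fin d → ℝ := fun j => (A * a j - B * b j) / (A - B) with hz
  set k : ℝ := ∑ j, (A * a j ^ 2 - B * b j ^ 2 - (A * a j - B * b j) ^ 2 / (A - B)) with hk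
  have hg : ∀ x : Fin d → ℝ, gainFixedCenters s t (toEuc x) a b
      = (A - B) * ∑ j, (x j - z j) ^ 2 + k := fun x => gain_eq A B hl0.ne' x a b
  have : IsProbabilityMeasure (gaussianVec d μ σ) := by unfold gaussianVec; infer_instance
  set M : ℝ := (√(√d * σ ^ 2 * (A - B)))⁻¹ with hM
  have key := esseen (gaussianVec d μ σ) (fun x => gainFixedCenters s t (toEuc x) a b)
    (by simp_rw [hg]; fun_prop) M (fun w hw => by
      simp_rw [hg]
      have e2 : ∀ x : Fin d → ℝ, 
          Complex.exp (((w * ((A - B) * ∑ j, (x j - z j) ^ 2 + k) : ℝ) : ℂ) * Complex.I) =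
          Complex.exp (((w * k : ℝ) : ℂ) * Complex.I) *
          Complex.exp (((w * (A - B) * ∑ j, (x j - z j) ^ 2 : ℝ) : ℂ) * Complex.I) := by
        intro x
        rw [← Complex.exp_add]
        congr 1
        push_cast
        ring
      simp_rw [e2]
      rw [integral_const_mul, norm_mul, Complex.norm_exp_ofReal_mul_I, one_mul]
      refine (norm_char_quad d hd μ z σ (w * (A - B)) hσ (mul_ne_zero hw hl0.ne')).trans
        (le_of_eq ?_)
      rw [hM, ← mul_inv, ← Real.sqrt_mul (by positivity), abs_mul, abs_of_pos hl0]
      congr 2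
      ring) r ε hε
  refine key.trans (ENNReal.ofReal_le_ofReal ?_)
  have hK : 0 ≤ ∫ u, (√|u|)⁻¹ ∂gaussianReal 0 1 := integral_nonneg fun u => by positivity
  have hMb : M * √ε ≤ (n : ℝ) / (d : ℝ) ^ ((1 : ℝ) / 4) * √(ε / σ ^ 2) := by
    have e1 : (d : ℝ) ^ ((1 : ℝ) / 4) = √√d := by
      rw [Real.sqrt_eq_rpow, Real.sqrt_eq_rpow, ← Real.rpow_mul hd'.le]; norm_num
    have e2 : (n : ℝ) = √((n : ℝ) ^ 2) := (Real.sqrt_sq (by positivity)).symm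
    rw [e1, e2, hM, ← Real.sqrt_inv, ← Real.sqrt_mul (by positivity), 
      ← Real.sqrt_div (by positivity), ← Real.sqrt_mul (by positivity)]
    apply Real.sqrt_le_sqrt
    have e3 : (A - B)⁻¹ ≤ (n : ℝ) ^ 2 := by
      have : (A - B)⁻¹ ≤ n := by
        rw [one_div] at hl
        exact inv_le_of_inv_le₀ (by positivity) hl
      nlinarith
    calc (√d * σ ^ 2 * (A - B))⁻¹ * ε = (A - B)⁻¹ * (ε / (√d * σ ^ 2)) := by
          field_simp
      _ ≤ (n : ℝ) ^ 2 * (ε / (√d * σ ^ 2)) := by gcongr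
      _ = _ := by field_simp
  have h0 : 0 ≤ M * √ε := by positivity
  calc _ ≤ (Real.exp (1/2) * (∫ u, (√|u|)⁻¹ ∂gaussianReal 0 1) + 1) * (M * √ε) := by
        nlinarith
    _ ≤ _ := by
        rw [mul_assoc _ ((n : ℝ) / _)]
        gcongr

/-- Fix centers `a, b ∈ ℝ^d` and cluster sizes `s ∈ {2, …, n}`,
`t ∈ {1, …, n}`, and let `x` be a `d`-dimensional Gaussian random vector with arbitrary mean
and standard deviation `σ ≤ 1`. There is an absolute constant `c > 0` such that for every
interval `I` of length `ε ≤ 1`, `ℙ(Δ_x(a, b) ∈ I) ≤ c·(n/d^{1/4})·√(ε/σ²)`. -/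
theorem gain_fixed_centers_interval :
    ∃ c : ℝ, 0 < c ∧
      ∀ (n d : ℕ), 0 < d →
        ∀ (s t : ℕ), 2 ≤ s → s ≤ n → 1 ≤ t → t ≤ n →
          ∀ (a b : EuclideanSpace ℝ (Fin d)) (μ : Fin d → ℝ) (σ : ℝ), 0 < σ → σ ≤ 1 →
            ∀ ε : ℝ, 0 ≤ ε → ε ≤ 1 →
              ∀ r : ℝ,
                gaussianVec d μ σ
                    {x : Fin d → ℝ | gainFixedCenters s t (toEuc x) a b ∈ Set.Icc r (r + ε)}
                  ≤ ENNReal.ofReal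
                      (c * ((n : ℝ) / (d : ℝ) ^ ((1 : ℝ) / 4)) * Real.sqrt (ε / σ ^ 2)) := by
  have hK : 0 ≤ ∫ u, (√|u|)⁻¹ ∂gaussianReal 0 1 := integral_nonneg fun u => by positivity
  refine ⟨Real.exp (1/2) * (∫ u, (√|u|)⁻¹ ∂gaussianReal 0 1) + 1, by positivity, ?_⟩
  intro n d hd s t hs hsn ht _ a b μ σ hσ _ ε hε _ r
  rcases hε.eq_or_lt with rfl | hε
  · set c := Real.exp (1/2) * (∫ u, (√|u|)⁻¹ ∂gaussianReal 0 1) + 1 with hc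
    have hcont : Continuous fun ε : ℝ => ENNReal.ofReal
        (c * ((n : ℝ) / (d : ℝ) ^ ((1 : ℝ) / 4)) * Real.sqrt (ε / σ ^ 2)) := by
      refine ENNReal.continuous_ofReal.comp ?_
      fun_prop
    have ht := (hcont.tendsto 0).mono_left (nhdsWithin_le_nhds (s := Set.Ioi 0))
    refine ge_of_tendsto ht ?_
    filter_upwards [self_mem_nhdsWithin] with ε hε
    refine le_trans (measure_mono fun x hx => ?_)
      (main_pos n d hd s t hs hsn ‹1 ≤ t› a b μ σ hσ ε hε r)
    have hε' : (0 : ℝ) < ε := hε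
    exact ⟨hx.1, hx.2.trans (by linarith)⟩
  · exact main_pos n d hd s t hs hsn ht a b μ σ hσ ε hε r
end
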